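/- arXiv:2504.00919 — 2 statements merged into one kernel-verified Lean document; each statement's English description precedes it below -/
import Mathlib

section
/- Fix α, τ, τ̃ > 0, an integer K ≥ 1, ω ∈ [−π, π], and u_1, …, u_K ∈ ℝ. Define weights a_k := 1 for 1 ≤ k ≤ K/2 and a_k := 2(1 − k/K) for K/2 < k ≤ K, and for x ∈ ℝ set V(x) := x² + Σ_{k=1}^K 2 a_k cos(kω) · x · u_k. Let μ_x be the product probability measure on ℝ² whose first factor is Laplace(trim_τ(x), 4τ/α) and whose second factor is Laplace(trim_{τ̃}(V(x)), 4τ̃/α). Then for all x, x' ∈ ℝ and every Borel set A ⊆ ℝ², μ_x(A) ≤ e^α · μ_{x'}(A). (This is the α-local-differential-privacy property of the interactive mechanism for pointwise estimation of the spectral density, where u_1,…,u_K play the role of the previously released values Z_{i−1},…,Z_{i−K}.) -/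
open MeasureTheory Real

/-- `trim c x` truncates `x` to the interval `[-c, c]`. -/
noncomputable def trim (c x : ℝ) : ℝ := max (-c) (min x c)

/-- The Laplace distribution with location `m` and scale `b`. -/
noncomputable def laplace (m b : ℝ) : Measure ℝ :=
  volume.withDensity fun z => ENNReal.ofReal ((1 / (2 * b)) * Real.exp (-|z - m| / b))

/-- The weights `a_k`: `1` for `1 ≤ k ≤ K/2` and `2(1 - k/K)` for `K/2 < k ≤ K`. -/
noncomputable def weightA (K k : ℕ) : ℝ :=
  if (2 * k : ℝ) ≤ K then 1 else 2 * (1 - (k : ℝ) / K)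

/-!
By the triangle inequality, shifting a Laplace law of scale `b` by `δ` changes its density by a
factor of at most `exp (|δ| / b)`. Truncation at `±c` bounds every shift by `2 * c`, so at scale
`4 * c / α` each of the two coordinates costs at most `exp (α / 2)`, and these costs multiply in
the product measure.
-/

instance sFinite_laplace (m b : ℝ) : SFinite (laplace m b) := by
  unfold laplace
  infer_instance

theorem trim_mem_Icc {c : ℝ} (hc : 0 ≤ c) (x : ℝ) : trim c x ∈ Set.Icc (-c) c :=
  ⟨le_max_left _ _, max_le (neg_le_self hc) (min_le_right _ _)⟩

theorem abs_trim_sub_trim_le {c : ℝ} (hc : 0 ≤ c) (x y : ℝ) : |trim c x - trim c y| ≤ 2 * c := by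
  have h := Real.dist_le_of_mem_Icc (trim_mem_Icc hc x) (trim_mem_Icc hc y)
  rwa [Real.dist_eq, sub_neg_eq_add, ← two_mul] at h

theorem exp_neg_abs_sub_div_le {b : ℝ} (hb : 0 ≤ b) (m m' z : ℝ) :
    exp (-|z - m| / b) ≤ exp (|m - m'| / b) * exp (-|z - m'| / b) := by
  rw [← exp_add, ← add_div]
  gcongr
  linarith [abs_sub_le z m m']

theorem laplace_le_smul_laplace {m m' b ε : ℝ} (hb : 0 ≤ b) (h : |m - m'| / b ≤ ε) :
    laplace m b ≤ ENNReal.ofReal (exp ε) • laplace m' b := by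
  unfold laplace
  rw [← withDensity_smul _ (by fun_prop)]
  refine withDensity_mono (.of_forall fun z => ?_)
  rw [Pi.smul_apply, smul_eq_mul, ← ENNReal.ofReal_mul (exp_nonneg _), mul_left_comm]
  refine ENNReal.ofReal_le_ofReal (mul_le_mul_of_nonneg_left ?_ (by positivity))
  exact (exp_neg_abs_sub_div_le hb m m' z).trans (by gcongr)

theorem laplace_trim_le_smul_laplace_trim {b c : ℝ} (hb : 0 ≤ b) (hc : 0 ≤ c) (x y : ℝ) :
    laplace (trim c x) b ≤ ENNReal.ofReal (exp (2 * c / b)) • laplace (trim c y) b :=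
  laplace_le_smul_laplace hb (div_le_div_of_nonneg_right (abs_trim_sub_trim_le hc x y) hb)

theorem prod_le_smul_prod {X Y : Type*} [MeasurableSpace X] [MeasurableSpace Y]
    {μ μ' : Measure X} {ν ν' : Measure Y} [SFinite ν'] {a b : ENNReal}
    (hμ : μ ≤ a • μ') (hν : ν ≤ b • ν') : μ.prod ν ≤ (a * b) • μ'.prod ν' :=
  calc μ.prod ν
    _ ≤ (a • μ').prod (b • ν') := Measure.prod_mono hμ hν
    _ = (a * b) • μ'.prod ν' := by
      rw [Measure.prod_smul_left, Measure.prod_smul_right, smul_smul]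

theorem ldp_interactive_pointwise_mechanism_general {α τ τ' : ℝ} (hα : 0 < α) (hτ : 0 < τ)
    (hτ' : 0 < τ') (x x' v v' : ℝ) :
    (laplace (trim τ x) (4 * τ / α)).prod (laplace (trim τ' v) (4 * τ' / α)) ≤
      ENNReal.ofReal (exp α) •
        (laplace (trim τ x') (4 * τ / α)).prod (laplace (trim τ' v') (4 * τ' / α)) := by
  have budget {c : ℝ} (hc : 0 < c) : 2 * c / (4 * c / α) = α / 2 := by
    field_simp
    norm_num
  have coordinate {c : ℝ} (hc : 0 < c) (y y' : ℝ) : laplace (trim c y) (4 * c / α) ≤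
      ENNReal.ofReal (exp (α / 2)) • laplace (trim c y') (4 * c / α) :=
    budget hc ▸ laplace_trim_le_smul_laplace_trim (by positivity) hc.le y y'
  have halves : ENNReal.ofReal (exp (α / 2)) * ENNReal.ofReal (exp (α / 2)) =
      ENNReal.ofReal (exp α) := by
    rw [← ENNReal.ofReal_mul (exp_nonneg _), ← exp_add, add_halves]
  exact halves ▸ prod_le_smul_prod (coordinate hτ x x') (coordinate hτ' v v')

/-- α-LDP property of the interactive mechanism for pointwise spectral density
estimation: `u 1, …, u K` play the role of the previously released values. -/
theorem ldp_interactive_pointwise_mechanism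
    (α τ τ' : ℝ) (hα : 0 < α) (hτ : 0 < τ) (hτ' : 0 < τ')
    (K : ℕ) (hK : 1 ≤ K) (ω : ℝ) (hω : ω ∈ Set.Icc (-π) π) (u : ℕ → ℝ) :
    ∀ x x' : ℝ, ∀ A : Set (ℝ × ℝ), MeasurableSet A →
      ((laplace (trim τ x) (4 * τ / α)).prod
          (laplace
            (trim τ' (x ^ 2 + ∑ k ∈ Finset.Icc 1 K,
              2 * weightA K k * Real.cos (k * ω) * x * u k))
            (4 * τ' / α))) A ≤
        ENNReal.ofReal (Real.exp α) *
          ((laplace (trim τ x') (4 * τ / α)).prod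
            (laplace
              (trim τ' (x' ^ 2 + ∑ k ∈ Finset.Icc 1 K,
                2 * weightA K k * Real.cos (k * ω) * x' * u k))
              (4 * τ' / α))) A := by
  intro x x' A _
  exact ldp_interactive_pointwise_mechanism_general hα hτ hτ' x x' _ _ A
end

section
/- Let δ > 0 and M₁ > 0. There are a constant c₁ > 0, depending only on M₁ and δ, and N ∈ ℕ such that for all n ≥ N and all α ∈ (0,1) the following holds. Set τ_n := (56 log^{1+δ} n)^{1/2}. Let (σ_k)_{k∈ℤ} be any valid autocovariance sequence of size n with Σ_{k∈ℤ} σ_k² ≤ M₁, let X = (X_1,…,X_n) be the corresponding centered Gaussian vector, and independently let ξ_1,…,ξ_n be i.i.d. Laplace(0, 2τ_n/α). Define the non-interactive privatized sample Z_i := trim_{τ_n}(X_i) + ξ_i. For an integer j with |j| ≤ √n define the estimator σ̂_j^{NI} := (1/n) Σ_{t=1}^{n−|j|} Z_t Z_{t+|j|} if j ≠ 0, and σ̂_0^{NI} := (1/n) Σ_{t=1}^n Z_t² − 8τ_n²/α². Then E[(σ̂_j^{NI} − σ_j)²] ≤ c₁ · log^{2+2δ}(n) · max{ 1/n, 1/(n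 α⁴) }. -/
open MeasureTheory ProbabilityTheory Real

/-- The `n × n` Toeplitz matrix `(σ_{|i-k|})` built from a sequence `σ : ℤ → ℝ`. -/
noncomputable def toeplitz (n : ℕ) (σ : ℤ → ℝ) : Matrix (Fin n) (Fin n) ℝ :=
  fun i k => σ |(i : ℤ) - (k : ℤ)|

/-- `μ` is the centered Gaussian measure on `ℝⁿ` with covariance matrix `S`
(Cramér–Wold characterisation). -/
def IsCenteredGaussian {n : ℕ} (μ : Measure (Fin n → ℝ)) (S : Matrix (Fin n) (Fin n) ℝ) : Prop :=
  ∀ a : Fin n → ℝ,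
    μ.map (fun x => ∑ i, a i * x i) =
      gaussianReal 0 (∑ i, ∑ k, a i * S i k * a k).toNNReal

/-- The non-interactive private estimator of the covariance coefficient `σ_j`:
`w = (X, ξ)`, `Z_i = trim_τ(X_i) + ξ_i`, and
`σ̂_j = (1/n) ∑_{t=1}^{n-|j|} Z_t Z_{t+|j|} - 𝟙{j=0} · 8τ²/α²`. -/
noncomputable def sigmaHatNI (n : ℕ) (j : ℤ) (τ α : ℝ)
    (w : (Fin n → ℝ) × (Fin n → ℝ)) : ℝ :=
  (1 / (n : ℝ)) *
      ∑ t : Fin (n - j.natAbs),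
        (trim τ (w.1 ⟨t.1, by have := t.isLt; omega⟩) + w.2 ⟨t.1, by have := t.isLt; omega⟩) *
          (trim τ (w.1 ⟨t.1 + j.natAbs, by have := t.isLt; omega⟩) +
            w.2 ⟨t.1 + j.natAbs, by have := t.isLt; omega⟩) -
    (if j = 0 then 8 * τ ^ 2 / α ^ 2 else 0)

/-!
Write `Z = T + ξ` with `T` the truncated sample. Then `n (σ̂_j - σ_j)` is the sum of a part
depending only on the signal, `∑ T_t T_{t+|j|} - n σ_j`, of two cross terms `∑ T_t ξ_{t+|j|}`
and `∑ T_{t+|j|} ξ_t`, and of a centered quadratic form in the noise. The noise is symmetric and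
independent, so the summands of the cross terms and of the noise part are orthogonal, and the
second moments of these sums are linear in `n`.

The signal part consists of the effect of the truncation, the sampling error
`∑ (X_t X_{t+|j|} - σ_j)` and the bias `-|j| σ_j`. Isserlis' formula bounds the second moment of
the sampling error by `2 n ∑ σ_k²`, and the squared bias is at most `n σ_j²` because `|j| ≤ √n`.
The summands of the truncation effect are not orthogonal, but by a Chernoff bound their second
moments are of order `exp (-τ² / (16 √M₁))`, which at `τ² = 56 log^{1+δ} n` is eventually below
`1 / n`.
-/

section SecondMoment

variable {Ω Ω' ι : Type*} [MeasurableSpace Ω] [MeasurableSpace Ω'] [Fintype ι]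
  {P : Measure Ω} {Q : Measure Ω'}

lemma integral_sum_sq {f : ι → Ω → ℝ} (hf : ∀ t, MemLp (f t) 2 P) :
    ∫ ω, (∑ t, f t ω) ^ 2 ∂P = ∑ s, ∑ t, ∫ ω, f s ω * f t ω ∂P := by
  have hprod (s t) : Integrable (fun ω => f s ω * f t ω) P := (hf s).integrable_mul (hf t)
  simp_rw [sq, Finset.sum_mul_sum]
  rw [integral_finsetSum _ fun s _ => integrable_finsetSum _ fun t _ => hprod s t]
  exact Finset.sum_congr rfl fun s _ => integral_finsetSum _ fun t _ => hprod s t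

/-- The bound `E[f²] ≤ K`. Square integrability is part of the notion, since the Bochner
integral of a non-integrable function is `0`. -/
structure SecondMomentLE (f : Ω → ℝ) (P : Measure Ω) (K : ℝ) : Prop where
  memLp : MemLp f 2 P
  integral_sq_le : ∫ ω, f ω ^ 2 ∂P ≤ K

namespace SecondMomentLE

variable {f g : Ω → ℝ} {K L : ℝ}

lemma mono (hf : SecondMomentLE f P K) (hKL : K ≤ L) : SecondMomentLE f P L :=
  ⟨hf.memLp, hf.integral_sq_le.trans hKL⟩

lemma of_sq_le (hf : AEStronglyMeasurable f P) (hg : Integrable g P)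
    (hfg : ∀ ω, f ω ^ 2 ≤ g ω) (hK : ∫ ω, g ω ∂P ≤ K) : SecondMomentLE f P K := by
  have hf_sq : Integrable (fun ω => f ω ^ 2) P :=
    hg.mono' (hf.pow 2) (.of_forall fun ω => by simpa using hfg ω)
  exact ⟨(memLp_two_iff_integrable_sq hf).2 hf_sq, (integral_mono hf_sq hg hfg).trans hK⟩

lemma const [IsProbabilityMeasure P] (c : ℝ) : SecondMomentLE (fun _ => c) P (c ^ 2) :=
  ⟨memLp_const c, by simp⟩

lemma const_mul (hf : SecondMomentLE f P K) (r : ℝ) :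
    SecondMomentLE (fun ω => r * f ω) P (r ^ 2 * K) := by
  refine ⟨hf.memLp.const_mul r, ?_⟩
  simp_rw [mul_pow, integral_const_mul]
  exact mul_le_mul_of_nonneg_left hf.integral_sq_le (sq_nonneg r)

lemma add (hf : SecondMomentLE f P K) (hg : SecondMomentLE g P L) :
    SecondMomentLE (fun ω => f ω + g ω) P (2 * (K + L)) := by
  have hf_sq := hf.memLp.integrable_sq
  have hg_sq := hg.memLp.integrable_sq
  refine of_sq_le (hf.memLp.add hg.memLp).1 ((hf_sq.add hg_sq).const_mul 2)
    (fun ω => add_sq_le) ?_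
  rw [integral_const_mul, integral_add' hf_sq hg_sq]
  gcongr
  exacts [hf.integral_sq_le, hg.integral_sq_le]

lemma sum {f : ι → Ω → ℝ} (hf : ∀ t, SecondMomentLE (f t) P K) :
    SecondMomentLE (fun ω => ∑ t, f t ω) P (Fintype.card ι ^ 2 * K) := by
  have hf_sq (t) := (hf t).memLp.integrable_sq
  refine of_sq_le (memLp_finsetSum _ fun t _ => (hf t).memLp).1
    ((integrable_finsetSum _ fun t _ => hf_sq t).const_mul _)
    (fun ω => sq_sum_le_card_mul_sum_sq) ?_
  rw [integral_const_mul, integral_finsetSum _ fun t _ => hf_sq t]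
  calc (Fintype.card ι : ℝ) * ∑ t, ∫ ω, f t ω ^ 2 ∂P
      ≤ Fintype.card ι * ∑ _t : ι, K := by gcongr with t; exact (hf t).integral_sq_le
    _ = Fintype.card ι ^ 2 * K := by simp [sq, mul_assoc]

lemma sum_of_orthogonal {f : ι → Ω → ℝ} (hf : ∀ t, SecondMomentLE (f t) P K)
    (horth : Pairwise fun s t => ∫ ω, f s ω * f t ω ∂P = 0) :
    SecondMomentLE (fun ω => ∑ t, f t ω) P (Fintype.card ι * K) := by
  refine ⟨memLp_finsetSum _ fun t _ => (hf t).memLp, ?_⟩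
  calc ∫ ω, (∑ t, f t ω) ^ 2 ∂P
      = ∑ t, ∫ ω, f t ω ^ 2 ∂P := by
        rw [integral_sum_sq fun t => (hf t).memLp]
        refine Finset.sum_congr rfl fun s _ => ?_
        rw [Fintype.sum_eq_single s fun t hts => horth hts.symm]
        simp_rw [sq]
    _ ≤ ∑ _t : ι, K := Finset.sum_le_sum fun t _ => (hf t).integral_sq_le
    _ = Fintype.card ι * K := by simp

lemma comp_measurePreserving {φ : Ω' → Ω} (hf : SecondMomentLE f P K)
    (hφ : MeasurePreserving φ Q P) : SecondMomentLE (fun ω => f (φ ω)) Q K := by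
  refine ⟨hf.memLp.comp_measurePreserving hφ, ?_⟩
  have hf_sq : AEStronglyMeasurable (fun ω => f ω ^ 2) (Q.map φ) := by
    rw [hφ.map_eq]
    exact hf.memLp.1.pow 2
  rw [← integral_map hφ.aemeasurable hf_sq, hφ.map_eq]
  exact hf.integral_sq_le

lemma mul_prod [SFinite P] [SFinite Q] {g : Ω' → ℝ} (hf : SecondMomentLE f P K)
    (hg : SecondMomentLE g Q L) :
    SecondMomentLE (fun w : Ω × Ω' => f w.1 * g w.2) (P.prod Q) (K * L) := by
  refine .of_sq_le (hf.memLp.1.comp_fst.mul hg.memLp.1.comp_snd)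
    (hf.memLp.integrable_sq.mul_prod hg.memLp.integrable_sq) (fun w => (mul_pow _ _ _).le) ?_
  rw [integral_prod_mul (fun ω => f ω ^ 2) fun ω => g ω ^ 2]
  exact mul_le_mul hf.integral_sq_le hg.integral_sq_le (integral_nonneg fun _ => sq_nonneg _)
    ((integral_nonneg fun _ => sq_nonneg _).trans hf.integral_sq_le)

lemma lintegral_le (hf : SecondMomentLE f P K) :
    ∫⁻ ω, ENNReal.ofReal (f ω ^ 2) ∂P ≤ ENNReal.ofReal K := by
  rw [← ofReal_integral_eq_lintegral_ofReal hf.memLp.integrable_sq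
    (.of_forall fun ω => sq_nonneg _)]
  exact ENNReal.ofReal_le_ofReal hf.integral_sq_le

end SecondMomentLE

end SecondMoment

section GaussianMoments

open Polynomial in
lemma deriv_eval_mul_exp (p : ℝ[X]) (c : ℝ) :
    deriv (fun t => p.eval t * exp (c * t ^ 2 / 2)) =
      fun t => (derivative p + C c * X * p).eval t * exp (c * t ^ 2 / 2) := by
  funext t
  have hexponent : HasDerivAt (fun t : ℝ => c * t ^ 2 / 2) (c * t) t := by
    convert! ((hasDerivAt_pow 2 t).const_mul c).div_const 2 using 1
    simp only [Nat.cast_ofNat, Nat.add_one_sub_one, pow_one]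
    ring
  convert ((p.hasDerivAt t).fun_mul hexponent.exp).deriv using 1
  simp only [eval_add, eval_mul, eval_C, eval_X]
  ring

open Polynomial in
lemma integral_pow_four_gaussianReal (v : NNReal) :
    ∫ x, x ^ 4 ∂(gaussianReal 0 v) = 3 * v ^ 2 := by
  have hmgf : mgf id (gaussianReal 0 v) =
      fun t => (1 : ℝ[X]).eval t * exp (v * t ^ 2 / 2) := by
    simp [mgf_id_gaussianReal]
  have hmoment := iteratedDeriv_mgf_zero (X := id) (μ := gaussianReal 0 v) (by simp) 4
  simp only [Pi.pow_apply, id] at hmoment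
  rw [← hmoment, hmgf, iteratedDeriv_eq_iterate]
  simp only [Function.iterate_succ, Function.iterate_zero, Function.comp_apply,
    deriv_eval_mul_exp]
  simp only [derivative_one, mul_one, zero_add, derivative_mul, derivative_C, zero_mul,
    derivative_X, derivative_add, mul_zero, add_zero, eval_add, eval_mul, eval_C, eval_X, id_eq,
    ne_eq, OfNat.ofNat_ne_zero, not_false_eq_true, zero_pow, zero_div, exp_zero]
  ring

lemma integral_sq_gaussianReal (v : NNReal) : ∫ x, x ^ 2 ∂(gaussianReal 0 v) = v := by
  have hvar := variance_fun_id_gaussianReal (μ := 0) (v := v)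
  rwa [variance_of_integral_eq_zero (by fun_prop) (by simp)] at hvar

lemma integrable_pow_gaussianReal (v : NNReal) (k : ℕ) :
    Integrable (fun x : ℝ => x ^ k) (gaussianReal 0 v) :=
  integrable_pow_of_mem_interior_integrableExpSet (X := fun x : ℝ => x) (by simp) k

end GaussianMoments

section CenteredGaussian

open scoped Matrix

lemma measurable_dotProduct {ι : Type*} [Fintype ι] (a : ι → ℝ) :
    Measurable fun x => a ⬝ᵥ x := by
  unfold dotProduct
  fun_prop

lemma dotProduct_mulVec_comm_of_isSymm {ι R : Type*} [Fintype ι] [CommSemiring R]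
    {S : Matrix ι ι R} (hS : S.IsSymm) (a b : ι → R) :
    a ⬝ᵥ S *ᵥ b = b ⬝ᵥ S *ᵥ a := by
  rw [Matrix.dotProduct_mulVec, ← Matrix.mulVec_transpose, dotProduct_comm, hS.eq]

namespace IsCenteredGaussian

variable {n : ℕ} {μ : Measure (Fin n → ℝ)} {S : Matrix (Fin n) (Fin n) ℝ}

lemma map_dotProduct (h : IsCenteredGaussian μ S) (a : Fin n → ℝ) :
    μ.map (fun x => a ⬝ᵥ x) = gaussianReal 0 (a ⬝ᵥ S *ᵥ a).toNNReal := by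
  simpa [dotProduct, Matrix.mulVec, Finset.mul_sum, mul_assoc] using h a

lemma isProbabilityMeasure (h : IsCenteredGaussian μ S) : IsProbabilityMeasure μ := by
  have hmap : IsProbabilityMeasure (μ.map fun x => (0 : Fin n → ℝ) ⬝ᵥ x) := by
    rw [h.map_dotProduct]
    infer_instance
  exact Measure.isProbabilityMeasure_of_map (fun x => (0 : Fin n → ℝ) ⬝ᵥ x)

lemma integrable_dotProduct_pow (h : IsCenteredGaussian μ S) (a : Fin n → ℝ) (k : ℕ) :
    Integrable (fun x => (a ⬝ᵥ x) ^ k) μ := by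
  have hpow := integrable_pow_gaussianReal (a ⬝ᵥ S *ᵥ a).toNNReal k
  rw [← h.map_dotProduct] at hpow
  exact hpow.comp_measurable (measurable_dotProduct a)

lemma integral_comp_dotProduct (h : IsCenteredGaussian μ S) (a : Fin n → ℝ) {f : ℝ → ℝ}
    (hf : Measurable f) :
    ∫ x, f (a ⬝ᵥ x) ∂μ = ∫ y, f y ∂(gaussianReal 0 (a ⬝ᵥ S *ᵥ a).toNNReal) := by
  rw [← h.map_dotProduct, integral_map (measurable_dotProduct a).aemeasurable
    hf.aestronglyMeasurable]

lemma integral_dotProduct_sq (h : IsCenteredGaussian μ S) (hS : S.PosSemidef) (a : Fin n → ℝ) :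
    ∫ x, (a ⬝ᵥ x) ^ 2 ∂μ = a ⬝ᵥ S *ᵥ a := by
  rw [h.integral_comp_dotProduct a (f := (· ^ 2)) (by fun_prop), integral_sq_gaussianReal,
    Real.coe_toNNReal _ (by simpa using hS.dotProduct_mulVec_nonneg a)]

lemma integral_dotProduct_pow_four (h : IsCenteredGaussian μ S) (hS : S.PosSemidef)
    (a : Fin n → ℝ) : ∫ x, (a ⬝ᵥ x) ^ 4 ∂μ = 3 * (a ⬝ᵥ S *ᵥ a) ^ 2 := by
  rw [h.integral_comp_dotProduct a (f := (· ^ 4)) (by fun_prop), integral_pow_four_gaussianReal,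
    Real.coe_toNNReal _ (by simpa using hS.dotProduct_mulVec_nonneg a)]

lemma memLp_dotProduct_mul_dotProduct (h : IsCenteredGaussian μ S) (a b : Fin n → ℝ) :
    MemLp (fun x => (a ⬝ᵥ x) * (b ⬝ᵥ x)) 2 μ := by
  have hmeas : Measurable fun x => (a ⬝ᵥ x) * (b ⬝ᵥ x) :=
    (measurable_dotProduct a).mul (measurable_dotProduct b)
  refine (SecondMomentLE.of_sq_le hmeas.aestronglyMeasurable
    ((h.integrable_dotProduct_pow a 4).add (h.integrable_dotProduct_pow b 4))
    (fun x => ?_) le_rfl).memLp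
  simp only [Pi.add_apply]
  nlinarith [sq_nonneg ((a ⬝ᵥ x) ^ 2 - (b ⬝ᵥ x) ^ 2), sq_nonneg ((a ⬝ᵥ x) ^ 2 + (b ⬝ᵥ x) ^ 2)]

lemma integral_dotProduct_mul_dotProduct (h : IsCenteredGaussian μ S) (hS : S.PosSemidef)
    (a b : Fin n → ℝ) : ∫ x, (a ⬝ᵥ x) * (b ⬝ᵥ x) ∂μ = a ⬝ᵥ S *ᵥ b := by
  have hsymm := dotProduct_mulVec_comm_of_isSymm
    (Matrix.isHermitian_iff_isSymm.1 hS.isHermitian)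
  have hpolar (x : Fin n → ℝ) : (a ⬝ᵥ x) * (b ⬝ᵥ x) =
      (1 / 4) * (((a + b) ⬝ᵥ x) ^ 2 - ((a - b) ⬝ᵥ x) ^ 2) := by
    rw [add_dotProduct, sub_dotProduct]
    ring
  simp_rw [hpolar]
  rw [integral_const_mul, integral_sub (h.integrable_dotProduct_pow _ 2)
    (h.integrable_dotProduct_pow _ 2), h.integral_dotProduct_sq hS, h.integral_dotProduct_sq hS]
  simp only [Matrix.mulVec_add, Matrix.mulVec_sub, add_dotProduct, sub_dotProduct,
    dotProduct_add, dotProduct_sub, hsymm b a]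
  ring

lemma integral_dotProduct_sq_mul_sq (h : IsCenteredGaussian μ S) (hS : S.PosSemidef)
    (a b : Fin n → ℝ) : ∫ x, (a ⬝ᵥ x) ^ 2 * (b ⬝ᵥ x) ^ 2 ∂μ =
      (a ⬝ᵥ S *ᵥ a) * (b ⬝ᵥ S *ᵥ b) + 2 * (a ⬝ᵥ S *ᵥ b) ^ 2 := by
  have hsymm := dotProduct_mulVec_comm_of_isSymm
    (Matrix.isHermitian_iff_isSymm.1 hS.isHermitian)
  have hpolar (x : Fin n → ℝ) : (a ⬝ᵥ x) ^ 2 * (b ⬝ᵥ x) ^ 2 =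
      (1 / 12) * ((((a + b) ⬝ᵥ x) ^ 4 + ((a - b) ⬝ᵥ x) ^ 4) -
        2 * ((a ⬝ᵥ x) ^ 4 + (b ⬝ᵥ x) ^ 4)) := by
    rw [add_dotProduct, sub_dotProduct]
    ring
  have hinteg (c : Fin n → ℝ) := h.integrable_dotProduct_pow c 4
  simp_rw [hpolar]
  rw [integral_const_mul, integral_sub ((hinteg _).fun_add (hinteg _))
      (((hinteg _).fun_add (hinteg _)).const_mul 2),
    integral_add (hinteg _) (hinteg _), integral_const_mul, integral_add (hinteg _) (hinteg _)]
  simp only [h.integral_dotProduct_pow_four hS]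
  simp only [Matrix.mulVec_add, Matrix.mulVec_sub, add_dotProduct, sub_dotProduct,
    dotProduct_add, dotProduct_sub, hsymm b a]
  ring

lemma integral_isserlis (h : IsCenteredGaussian μ S) (hS : S.PosSemidef)
    (a b c d : Fin n → ℝ) : ∫ x, (a ⬝ᵥ x) * (b ⬝ᵥ x) * ((c ⬝ᵥ x) * (d ⬝ᵥ x)) ∂μ =
      (a ⬝ᵥ S *ᵥ b) * (c ⬝ᵥ S *ᵥ d) + (a ⬝ᵥ S *ᵥ c) * (b ⬝ᵥ S *ᵥ d) +
        (a ⬝ᵥ S *ᵥ d) * (b ⬝ᵥ S *ᵥ c) := by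
  have hsymm := dotProduct_mulVec_comm_of_isSymm
    (Matrix.isHermitian_iff_isSymm.1 hS.isHermitian)
  have hpolar (x : Fin n → ℝ) : (a ⬝ᵥ x) * (b ⬝ᵥ x) * ((c ⬝ᵥ x) * (d ⬝ᵥ x)) = (1 / 16) *
      ((((a + b) ⬝ᵥ x) ^ 2 * ((c + d) ⬝ᵥ x) ^ 2 - ((a + b) ⬝ᵥ x) ^ 2 * ((c - d) ⬝ᵥ x) ^ 2) -
        (((a - b) ⬝ᵥ x) ^ 2 * ((c + d) ⬝ᵥ x) ^ 2 -
          ((a - b) ⬝ᵥ x) ^ 2 * ((c - d) ⬝ᵥ x) ^ 2)) := by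
    simp only [add_dotProduct, sub_dotProduct]
    ring
  have hinteg (e f : Fin n → ℝ) : Integrable (fun x => (e ⬝ᵥ x) ^ 2 * (f ⬝ᵥ x) ^ 2) μ := by
    simpa only [mul_pow] using (h.memLp_dotProduct_mul_dotProduct e f).integrable_sq
  have hdiff (e : Fin n → ℝ) : Integrable (fun x => (e ⬝ᵥ x) ^ 2 * ((c + d) ⬝ᵥ x) ^ 2 -
      (e ⬝ᵥ x) ^ 2 * ((c - d) ⬝ᵥ x) ^ 2) μ := (hinteg e _).sub (hinteg e _)
  simp_rw [hpolar]
  rw [integral_const_mul, integral_sub (hdiff _) (hdiff _),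
    integral_sub (hinteg _ _) (hinteg _ _), integral_sub (hinteg _ _) (hinteg _ _)]
  simp only [h.integral_dotProduct_sq_mul_sq hS]
  simp only [Matrix.mulVec_add, Matrix.mulVec_sub, add_dotProduct, sub_dotProduct,
    dotProduct_add, dotProduct_sub, hsymm b a, hsymm d c]
  ring

lemma memLp_mul (h : IsCenteredGaussian μ S) (i j : Fin n) :
    MemLp (fun x => x i * x j) 2 μ := by
  simpa using h.memLp_dotProduct_mul_dotProduct (Pi.single i 1) (Pi.single j 1)

lemma integral_mul (h : IsCenteredGaussian μ S) (hS : S.PosSemidef) (i j : Fin n) :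
    ∫ x, x i * x j ∂μ = S i j := by
  simpa using h.integral_dotProduct_mul_dotProduct hS (Pi.single i 1) (Pi.single j 1)

lemma integral_mul_mul_mul (h : IsCenteredGaussian μ S) (hS : S.PosSemidef) (i j k l : Fin n) :
    ∫ x, x i * x j * (x k * x l) ∂μ = S i j * S k l + S i k * S j l + S i l * S j k := by
  simpa using h.integral_isserlis hS (Pi.single i 1) (Pi.single j 1) (Pi.single k 1)
    (Pi.single l 1)

lemma integral_mul_sub_mul_mul_sub (h : IsCenteredGaussian μ S) (hS : S.PosSemidef)
    (i j k l : Fin n) :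
    ∫ x, (x i * x j - S i j) * (x k * x l - S k l) ∂μ = S i k * S j l + S i l * S j k := by
  have := h.isProbabilityMeasure
  have hcov := covariance_eq_sub (h.memLp_mul i j) (h.memLp_mul k l)
  simp only [covariance, Pi.mul_apply, h.integral_mul hS, h.integral_mul_mul_mul hS] at hcov
  rw [hcov]
  ring

lemma integrable_exp_mul (h : IsCenteredGaussian μ S) (i : Fin n) (s : ℝ) :
    Integrable (fun x => exp (s * x i)) μ := by
  have hmap := h.map_dotProduct (Pi.single i 1)
  simp only [single_one_dotProduct] at hmap
  have hexp := integrable_exp_mul_gaussianReal (μ := 0)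
    (v := (Pi.single i 1 ⬝ᵥ S *ᵥ Pi.single i 1).toNNReal) s
  simp only [single_one_dotProduct] at hexp
  rw [← hmap] at hexp
  exact hexp.comp_measurable (measurable_pi_apply i)

lemma integral_exp_mul (h : IsCenteredGaussian μ S) (hS : S.PosSemidef) (i : Fin n) (s : ℝ) :
    ∫ x, exp (s * x i) ∂μ = exp (S i i * s ^ 2 / 2) := by
  have hmgf := mgf_gaussianReal (h.map_dotProduct (Pi.single i 1)) s
  simpa [mgf, hS.diag_nonneg] using hmgf

lemma integrable_cosh_mul (h : IsCenteredGaussian μ S) (i : Fin n) (s : ℝ) :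
    Integrable (fun x => cosh (s * x i)) μ := by
  simp_rw [Real.cosh_eq, ← neg_mul]
  exact ((h.integrable_exp_mul i s).add (h.integrable_exp_mul i (-s))).div_const 2

lemma integral_cosh_mul (h : IsCenteredGaussian μ S) (hS : S.PosSemidef) (i : Fin n) (s : ℝ) :
    ∫ x, cosh (s * x i) ∂μ = exp (S i i * s ^ 2 / 2) := by
  simp_rw [Real.cosh_eq, ← neg_mul]
  rw [integral_div, integral_add (h.integrable_exp_mul i s) (h.integrable_exp_mul i (-s)),
    h.integral_exp_mul hS, h.integral_exp_mul hS, neg_sq]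
  ring

end IsCenteredGaussian

end CenteredGaussian

section Truncation

variable {c : ℝ}

lemma abs_trim_le (hc : 0 ≤ c) (x : ℝ) : |trim c x| ≤ c :=
  abs_le.2 ⟨le_max_left _ _, max_le (by linarith) (min_le_right _ _)⟩

lemma abs_trim_le_abs (hc : 0 ≤ c) (x : ℝ) : |trim c x| ≤ |x| :=
  abs_le.2 ⟨le_max_of_le_right (le_min (neg_abs_le x) (by linarith [abs_nonneg x])),
    max_le (by linarith [abs_nonneg x]) ((min_le_left _ _).trans (le_abs_self x))⟩

lemma trim_of_abs_le {x : ℝ} (hx : |x| ≤ c) : trim c x = x := by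
  rw [trim, min_eq_left (abs_le.1 hx).2, max_eq_right (abs_le.1 hx).1]

@[fun_prop]
lemma measurable_trim : Measurable (trim c) :=
  measurable_const.max (measurable_id.min measurable_const)

lemma sq_trim_mul_trim_sub_mul_le (hc : 0 ≤ c) (x y : ℝ) :
    (trim c x * trim c y - x * y) ^ 2 ≤ 4 * (x ^ 2 * y ^ 2) := by
  have htrim : |trim c x * trim c y| ≤ |x * y| := by
    rw [abs_mul, abs_mul]
    exact mul_le_mul (abs_trim_le_abs hc x) (abs_trim_le_abs hc y) (abs_nonneg _) (abs_nonneg _)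
  calc (trim c x * trim c y - x * y) ^ 2
      ≤ (2 * |x * y|) ^ 2 := sq_le_sq.2 (by
        rw [abs_of_nonneg (by positivity : 0 ≤ 2 * |x * y|)]
        linarith [abs_sub (trim c x * trim c y) (x * y)])
    _ = 4 * (x ^ 2 * y ^ 2) := by rw [mul_pow, sq_abs]; ring

lemma sq_le_two_mul_exp_abs (x : ℝ) : x ^ 2 ≤ 2 * exp |x| := by
  have hexp := quadratic_le_exp_of_nonneg (abs_nonneg x)
  rw [sq_abs] at hexp
  linarith [abs_nonneg x]

lemma exp_add_le_cosh_add_cosh (x y : ℝ) : exp (x + y) ≤ cosh (2 * x) + cosh (2 * y) := by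
  have hx : exp (2 * x) / 2 ≤ cosh (2 * x) := by
    rw [Real.cosh_eq]; linarith [exp_pos (-(2 * x))]
  have hy : exp (2 * y) / 2 ≤ cosh (2 * y) := by
    rw [Real.cosh_eq]; linarith [exp_pos (-(2 * y))]
  have hamgm : exp (x + y) ≤ (exp (2 * x) + exp (2 * y)) / 2 := by
    rw [two_mul x, two_mul y, exp_add, exp_add, exp_add]
    nlinarith [sq_nonneg (exp x - exp y)]
  linarith

lemma sq_trim_mul_trim_sub_mul_le_cosh (hc : 0 ≤ c) {l : ℝ} (hl : 0 ≤ l) (x y : ℝ) :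
    (trim c x * trim c y - x * y) ^ 2 ≤
      16 * exp (-(l * c)) * (cosh (2 * (l + 1) * x) + cosh (2 * (l + 1) * y)) := by
  by_cases hxy : |x| ≤ c ∧ |y| ≤ c
  · rw [trim_of_abs_le hxy.1, trim_of_abs_le hxy.2, sub_self, zero_pow two_ne_zero]
    positivity
  have hfar : c ≤ |x| + |y| := by
    by_contra! hlt
    exact hxy ⟨by linarith [abs_nonneg y], by linarith [abs_nonneg x]⟩
  have hcosh (z : ℝ) : cosh (2 * ((l + 1) * |z|)) = cosh (2 * (l + 1) * z) := by
    rw [← Real.cosh_abs (2 * (l + 1) * z), abs_mul (2 * (l + 1)),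
      abs_of_nonneg (by positivity : 0 ≤ 2 * (l + 1)), mul_assoc]
  calc (trim c x * trim c y - x * y) ^ 2
      ≤ 4 * (x ^ 2 * y ^ 2) := sq_trim_mul_trim_sub_mul_le hc x y
    _ ≤ 4 * ((2 * exp |x|) * (2 * exp |y|)) := by
        gcongr <;> exact sq_le_two_mul_exp_abs _
    _ = 16 * exp (|x| + |y|) := by rw [exp_add]; ring
    -- Chernoff's trick: `exp (l * (|x| + |y| - c)) ≥ 1`
    _ ≤ 16 * exp (-(l * c) + ((l + 1) * |x| + (l + 1) * |y|)) := by
        refine mul_le_mul_of_nonneg_left (exp_le_exp.2 ?_) (by norm_num)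
        linarith [mul_le_mul_of_nonneg_left hfar hl]
    _ ≤ 16 * exp (-(l * c)) * (cosh (2 * ((l + 1) * |x|)) + cosh (2 * ((l + 1) * |y|))) := by
        rw [exp_add, mul_assoc]
        gcongr
        exact exp_add_le_cosh_add_cosh _ _
    _ = 16 * exp (-(l * c)) * (cosh (2 * (l + 1) * x) + cosh (2 * (l + 1) * y)) := by
        rw [hcosh, hcosh]

/-- A bound for the mean squared error of replacing `X_i X_k` by the product of the values
truncated at `c`, for centered Gaussian `X_i` and `X_k` with variances at most `v`. -/
noncomputable def truncationError (c v : ℝ) : ℝ := 32 * exp (4 * v - c ^ 2 / (16 * v))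

lemma IsCenteredGaussian.secondMomentLE_trim_mul_trim_sub_mul {n : ℕ} {μ : Measure (Fin n → ℝ)}
    {S : Matrix (Fin n) (Fin n) ℝ} (h : IsCenteredGaussian μ S) (hS : S.PosSemidef)
    (hc : 0 ≤ c) {v : ℝ} (hv : 0 < v) (hdiag : ∀ i, S i i ≤ v) (i k : Fin n) :
    SecondMomentLE (fun x => trim c (x i) * trim c (x k) - x i * x k) μ
      (truncationError c v) := by
  set l := c / (8 * v) with hl
  have hcosh (i) := h.integrable_cosh_mul i (2 * (l + 1))
  refine .of_sq_le (Measurable.aestronglyMeasurable (by fun_prop))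
    (((hcosh i).add (hcosh k)).const_mul (16 * exp (-(l * c))))
    (fun x => sq_trim_mul_trim_sub_mul_le_cosh hc (by positivity) (x i) (x k)) ?_
  rw [integral_const_mul, integral_add' (hcosh i) (hcosh k), h.integral_cosh_mul hS,
    h.integral_cosh_mul hS]
  calc 16 * exp (-(l * c)) *
        (exp (S i i * (2 * (l + 1)) ^ 2 / 2) + exp (S k k * (2 * (l + 1)) ^ 2 / 2))
      ≤ 16 * exp (-(l * c)) *
        (exp (v * (2 * (l + 1)) ^ 2 / 2) + exp (v * (2 * (l + 1)) ^ 2 / 2)) := by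
        gcongr <;> apply hdiag
    _ = 32 * exp (-(l * c) + v * (2 * (l + 1)) ^ 2 / 2) := by rw [exp_add]; ring
    _ ≤ truncationError c v := by
        rw [truncationError]
        gcongr
        -- `l` is chosen to turn the difference of the two sides into a square
        have hsq : 4 * v - c ^ 2 / (16 * v) - (-(l * c) + v * (2 * (l + 1)) ^ 2 / 2) =
            (c - 8 * v) ^ 2 / (32 * v) := by
          rw [hl]; field_simp; ring
        have : 0 ≤ (c - 8 * v) ^ 2 / (32 * v) := by positivity
        linarith

end Truncation

section Laplace

variable {m b : ℝ}

lemma integral_abs_pow_mul_exp_neg_abs_div (hb : 0 < b) (k : ℕ) :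
    ∫ x : ℝ, |x| ^ k * exp (-|x| / b) = 2 * (b ^ (k + 1) * k.factorial) := by
  rw [integral_comp_abs (f := fun x => x ^ k * exp (-x / b))]
  have hGamma := Real.integral_rpow_mul_exp_neg_mul_Ioi (a := k + 1) (r := 1 / b)
    (by positivity) (by positivity)
  rw [Real.Gamma_nat_eq_factorial, one_div_one_div] at hGamma
  rw [← Real.rpow_natCast b (k + 1), Nat.cast_add_one, ← hGamma]
  congr 1
  refine setIntegral_congr_fun measurableSet_Ioi fun x _ => ?_
  simp only [add_sub_cancel_right, Real.rpow_natCast]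
  congr 2
  ring

lemma integrable_abs_pow_mul_exp_neg_abs_div (hb : 0 < b) (k : ℕ) :
    Integrable fun x : ℝ => |x| ^ k * exp (-|x| / b) := by
  refine .of_integral_ne_zero ?_
  rw [integral_abs_pow_mul_exp_neg_abs_div hb]
  positivity

lemma integrable_laplace_iff (hb : 0 < b) {f : ℝ → ℝ} :
    Integrable f (laplace m b) ↔
      Integrable fun x => (1 / (2 * b)) * exp (-|x - m| / b) * f x := by
  rw [laplace, integrable_withDensity_iff_integrable_smul' (by fun_prop)
    (.of_forall fun _ => ENNReal.ofReal_lt_top)]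
  simp_rw [ENNReal.toReal_ofReal (by positivity : 0 ≤ (1 / (2 * b)) * exp (-|_ - m| / b)),
    smul_eq_mul]

lemma integral_laplace (hb : 0 < b) (f : ℝ → ℝ) :
    ∫ x, f x ∂(laplace m b) = ∫ x, (1 / (2 * b)) * exp (-|x - m| / b) * f x := by
  rw [laplace, integral_withDensity_eq_integral_toReal_smul (by fun_prop)
    (.of_forall fun _ => ENNReal.ofReal_lt_top)]
  simp_rw [ENNReal.toReal_ofReal (by positivity : 0 ≤ (1 / (2 * b)) * exp (-|_ - m| / b)),
    smul_eq_mul]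

lemma integrable_abs_sub_pow_laplace (hb : 0 < b) (k : ℕ) :
    Integrable (fun x => |x - m| ^ k) (laplace m b) := by
  rw [integrable_laplace_iff hb]
  refine (((integrable_abs_pow_mul_exp_neg_abs_div hb k).comp_sub_right m).const_mul
    (1 / (2 * b))).congr (.of_forall fun x => ?_)
  ring

lemma integral_abs_sub_pow_laplace (hb : 0 < b) (k : ℕ) :
    ∫ x, |x - m| ^ k ∂(laplace m b) = k.factorial * b ^ k := by
  calc ∫ x, |x - m| ^ k ∂(laplace m b)
      = ∫ x, (1 / (2 * b)) * (|x - m| ^ k * exp (-|x - m| / b)) := by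
        rw [integral_laplace hb]
        exact integral_congr_ae (.of_forall fun x => by ring)
    _ = (1 / (2 * b)) * (2 * (b ^ (k + 1) * k.factorial)) := by
        rw [integral_sub_right_eq_self fun x => (1 / (2 * b)) * (|x| ^ k * exp (-|x| / b)),
          integral_const_mul, integral_abs_pow_mul_exp_neg_abs_div hb]
    _ = k.factorial * b ^ k := by field_simp; ring

lemma isProbabilityMeasure_laplace (hb : 0 < b) : IsProbabilityMeasure (laplace m b) := by
  rw [isProbabilityMeasure_iff_real]
  simpa using integral_abs_sub_pow_laplace (m := m) hb 0

lemma integral_sq_laplace (hb : 0 < b) : ∫ x, x ^ 2 ∂(laplace 0 b) = 2 * b ^ 2 := by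
  simpa [Nat.factorial] using integral_abs_sub_pow_laplace (m := 0) hb 2

lemma secondMomentLE_id_laplace (hb : 0 < b) :
    SecondMomentLE (fun x => x) (laplace 0 b) (2 * b ^ 2) := by
  refine .of_sq_le (by fun_prop) (g := fun x => x ^ 2) ?_ (fun x => le_rfl)
    (integral_sq_laplace hb).le
  simpa using integrable_abs_sub_pow_laplace (m := 0) hb 2

lemma secondMomentLE_sq_laplace (hb : 0 < b) :
    SecondMomentLE (fun x => x ^ 2) (laplace 0 b) (24 * b ^ 4) := by
  refine .of_sq_le (by fun_prop) (integrable_abs_sub_pow_laplace (m := 0) hb 4) (fun x => ?_) ?_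
  · rw [sub_zero, Even.pow_abs (by decide), ← pow_mul]
  · rw [integral_abs_sub_pow_laplace hb]
    norm_num [Nat.factorial]

lemma isNegInvariant_laplace : (laplace 0 b).IsNegInvariant := by
  refine ⟨Measure.ext fun s hs => ?_⟩
  rw [Measure.neg, Measure.map_apply measurable_neg hs, laplace,
    withDensity_apply _ (measurable_neg hs), withDensity_apply _ hs,
    ← (Measure.measurePreserving_neg volume).setLIntegral_comp_preimage_emb
      (MeasurableEquiv.neg ℝ).measurableEmbedding]
  simp only [sub_zero, abs_neg, Set.preimage_preimage, neg_neg, Set.preimage_id']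

end Laplace

section SymmetricNoise

variable {ι κ : Type*}

/-- The sign change of the coordinate `i` of a vector. It preserves products of symmetric
probability measures, so functions that are odd in one coordinate have mean zero. -/
def flipSign [DecidableEq ι] (i : ι) : (ι → ℝ) ≃ᵐ (ι → ℝ) :=
  MeasurableEquiv.piCongrRight fun k =>
    if k = i then MeasurableEquiv.neg ℝ else MeasurableEquiv.refl ℝ

lemma flipSign_apply_self [DecidableEq ι] (i : ι) (y : ι → ℝ) : flipSign i y i = -y i := by
  simp [flipSign, MeasurableEquiv.piCongrRight]

lemma flipSign_apply_of_ne [DecidableEq ι] {i k : ι} (hki : k ≠ i) (y : ι → ℝ) :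
    flipSign i y k = y k := by
  simp [flipSign, MeasurableEquiv.piCongrRight, hki]

variable [Fintype ι] [Fintype κ] {ν : Measure ℝ} [IsProbabilityMeasure ν]

lemma measurePreserving_flipSign [DecidableEq ι] [ν.IsNegInvariant] (i : ι) :
    MeasurePreserving (flipSign i) (Measure.pi fun _ : ι => ν) (Measure.pi fun _ => ν) := by
  refine measurePreserving_pi _ _ fun k => ?_
  by_cases hki : k = i
  · simpa [hki] using Measure.measurePreserving_neg ν
  · simpa [hki] using MeasurePreserving.id ν

lemma integral_eq_zero_of_comp_flipSign [DecidableEq ι] [ν.IsNegInvariant] (i : ι)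
    {F : (ι → ℝ) → ℝ} (hF : ∀ y, F (flipSign i y) = -F y) :
    ∫ y, F y ∂(Measure.pi fun _ => ν) = 0 := by
  have hflip := (measurePreserving_flipSign (ν := ν) i).integral_comp' F
  simp_rw [hF, integral_neg] at hflip
  linarith

lemma integral_eval_mul_eval_eq_zero [ν.IsNegInvariant] {i k : ι} (hik : i ≠ k) :
    ∫ y, y i * y k ∂(Measure.pi fun _ => ν) = 0 := by
  classical
  refine integral_eq_zero_of_comp_flipSign i fun y => ?_
  rw [flipSign_apply_self, flipSign_apply_of_ne hik.symm, neg_mul]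

lemma integral_eval_mul_four_eq_zero [ν.IsNegInvariant] {i k i' k' : ι} (hik : i ≠ k)
    (hne : s(i, k) ≠ s(i', k')) :
    ∫ y, y i * y k * (y i' * y k') ∂(Measure.pi fun _ => ν) = 0 := by
  classical
  by_cases hi : i ∈ s(i', k')
  · have hk : k ∉ s(i', k') := fun hk => hne ((Sym2.mem_and_mem_iff hik).1 ⟨hi, hk⟩).symm
    rw [Sym2.mem_iff, not_or] at hk
    refine integral_eq_zero_of_comp_flipSign k fun y => ?_
    rw [flipSign_apply_self, flipSign_apply_of_ne hik, flipSign_apply_of_ne (Ne.symm hk.1),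
      flipSign_apply_of_ne (Ne.symm hk.2)]
    ring
  · rw [Sym2.mem_iff, not_or] at hi
    refine integral_eq_zero_of_comp_flipSign i fun y => ?_
    rw [flipSign_apply_self, flipSign_apply_of_ne hik.symm, flipSign_apply_of_ne (Ne.symm hi.1),
      flipSign_apply_of_ne (Ne.symm hi.2)]
    ring

lemma secondMomentLE_eval_mul_eval {L : ℝ} (hν : SecondMomentLE (fun x => x ^ 2) ν L) (i k : ι) :
    SecondMomentLE (fun y : ι → ℝ => y i * y k) (Measure.pi fun _ => ν) L := by
  have heval (i : ι) := hν.comp_measurePreserving (measurePreserving_eval (fun _ : ι => ν) i)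
  have hinteg (i : ι) := (heval i).memLp.integrable_sq
  refine .of_sq_le (by fun_prop) (((hinteg i).add (hinteg k)).const_mul (1 / 2)) (fun y => ?_) ?_
  · simp only [Pi.add_apply]
    nlinarith [sq_nonneg (y i ^ 2 - y k ^ 2)]
  · rw [integral_const_mul, integral_add' (hinteg i) (hinteg k)]
    linarith [(heval i).integral_sq_le, (heval k).integral_sq_le]

lemma secondMomentLE_sum_eval_mul_eval [ν.IsNegInvariant] {L : ℝ}
    (hν : SecondMomentLE (fun x => x ^ 2) ν L) {p q : κ → ι} (hpq : ∀ t, p t ≠ q t)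
    (hinj : Function.Injective fun t => s(p t, q t)) :
    SecondMomentLE (fun y => ∑ t, y (p t) * y (q t)) (Measure.pi fun _ => ν)
      (Fintype.card κ * L) :=
  .sum_of_orthogonal (fun t => secondMomentLE_eval_mul_eval hν (p t) (q t))
    fun _ _ hst => integral_eval_mul_four_eq_zero (hpq _) (hinj.ne hst)

lemma secondMomentLE_sum_comp_eval_sub_integral {L : ℝ} {f : ℝ → ℝ}
    (hf : SecondMomentLE f ν L) :
    SecondMomentLE (fun y : ι → ℝ => ∑ i, (f (y i) - ∫ z, f z ∂ν)) (Measure.pi fun _ => ν)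
      (Fintype.card ι * L) := by
  have heval (i : ι) : MemLp (fun y : ι → ℝ => f (y i)) 2 (Measure.pi fun _ => ν) :=
    hf.memLp.comp_measurePreserving (measurePreserving_eval (fun _ : ι => ν) i)
  have hmean : ∫ y : ι → ℝ, ∑ i, f (y i) ∂(Measure.pi fun _ => ν) = ∑ _i : ι, ∫ z, f z ∂ν := by
    rw [integral_finsetSum _ fun i _ => (heval i).integrable one_le_two]
    exact Finset.sum_congr rfl fun i _ => integral_comp_eval (μ := fun _ => ν) hf.memLp.1
  refine ⟨memLp_finsetSum _ fun i _ => (heval i).sub (memLp_const _), ?_⟩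
  calc ∫ y : ι → ℝ, (∑ i, (f (y i) - ∫ z, f z ∂ν)) ^ 2 ∂(Measure.pi fun _ => ν)
      = Var[∑ i, fun y : ι → ℝ => f (y i); Measure.pi fun _ => ν] := by
        rw [variance_eq_integral (memLp_finsetSum' _ fun i _ => heval i).1.aemeasurable]
        simp only [Finset.sum_apply, hmean, Finset.sum_sub_distrib]
    _ = ∑ _i : ι, Var[f; ν] := variance_sum_pi fun _ => hf.memLp
    _ ≤ ∑ _i : ι, L := by
        gcongr
        exact (variance_le_expectation_sq hf.memLp.1).trans hf.integral_sq_le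
    _ = Fintype.card ι * L := by simp

lemma secondMomentLE_sum_mul_eval [ν.IsNegInvariant] {Ω : Type*} [MeasurableSpace Ω]
    {P : Measure Ω} [SFinite P] {K L : ℝ} (hν : SecondMomentLE (fun x => x) ν L)
    {f : κ → Ω → ℝ} (hf : ∀ t, SecondMomentLE (f t) P K) {q : κ → ι}
    (hq : Function.Injective q) :
    SecondMomentLE (fun w : Ω × (ι → ℝ) => ∑ t, f t w.1 * w.2 (q t))
      (P.prod (Measure.pi fun _ => ν)) (Fintype.card κ * (K * L)) := by
  refine .sum_of_orthogonal (fun t => (hf t).mul_prod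
    (hν.comp_measurePreserving (measurePreserving_eval (fun _ : ι => ν) (q t)))) fun s t hst => ?_
  simp_rw [mul_mul_mul_comm]
  rw [integral_prod_mul (fun ω => f s ω * f t ω) fun y : ι → ℝ => y (q s) * y (q t),
    integral_eval_mul_eval_eq_zero (hq.ne hst), mul_zero]

end SymmetricNoise

section Toeplitz

/-- The index `t` of the first factor of the `t`-th product in the empirical covariance at
lag `J`. -/
def lagFst {n J : ℕ} (t : Fin (n - J)) : Fin n := ⟨t.1, by have := t.isLt; omega⟩

/-- The index `t + J` of the second factor of the `t`-th product in the empirical covariance at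
lag `J`. -/
def lagSnd {n J : ℕ} (t : Fin (n - J)) : Fin n := ⟨t.1 + J, by have := t.isLt; omega⟩

variable {n J : ℕ} {σ : ℤ → ℝ} {M : ℝ}

lemma lagFst_injective : Function.Injective (lagFst : Fin (n - J) → Fin n) :=
  fun _ _ hst => Fin.ext (Fin.mk.inj hst)

lemma lagSnd_injective : Function.Injective (lagSnd : Fin (n - J) → Fin n) :=
  fun _ _ hst => Fin.ext (Nat.add_right_cancel (Fin.mk.inj hst))

lemma lagFst_ne_lagSnd (hJ : 0 < J) (t : Fin (n - J)) : lagFst t ≠ lagSnd t :=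
  fun h => (Nat.lt_add_of_pos_right hJ).ne (Fin.mk.inj h)

lemma injective_mk_lagFst_lagSnd :
    Function.Injective fun t : Fin (n - J) => s(lagFst t, lagSnd t) := by
  intro s t hst
  simp only [lagFst, lagSnd, Sym2.eq_iff, Fin.mk.injEq] at hst
  exact Fin.ext (by omega)

lemma toeplitz_apply_of_even (hσ : ∀ k, σ (-k) = σ k) (i k : Fin n) :
    toeplitz n σ i k = σ ((i : ℤ) - k) := by
  rw [toeplitz]
  rcases abs_choice ((i : ℤ) - k) with h | h <;> rw [h]
  exact hσ _

lemma toeplitz_lagFst_lagSnd (t : Fin (n - J)) : toeplitz n σ (lagFst t) (lagSnd t) = σ J := by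
  simp [toeplitz, lagFst, lagSnd]

lemma sum_sq_sub_le_of_tsum_le (hs : Summable fun k : ℤ => σ k ^ 2)
    (hM : ∑' k : ℤ, σ k ^ 2 ≤ M) (m : ℕ) (a : ℤ) : ∑ t : Fin m, σ (a - t) ^ 2 ≤ M := by
  have hinj : Function.Injective fun t : Fin m => a - (t : ℤ) := fun s t hst =>
    Fin.ext (Nat.cast_injective (sub_right_injective hst))
  have hle := tsum_comp_le_tsum_of_inj hs (fun k => sq_nonneg _) hinj
  rw [tsum_fintype] at hle
  exact hle.trans hM

lemma sum_sum_toeplitz_mul_le (hσ : ∀ k, σ (-k) = σ k) (hs : Summable fun k : ℤ => σ k ^ 2)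
    (hM : ∑' k : ℤ, σ k ^ 2 ≤ M) :
    ∑ s : Fin (n - J), ∑ t : Fin (n - J),
      (toeplitz n σ (lagFst s) (lagFst t) * toeplitz n σ (lagSnd s) (lagSnd t) +
        toeplitz n σ (lagFst s) (lagSnd t) * toeplitz n σ (lagSnd s) (lagFst t)) ≤
      (n - J : ℕ) * (2 * M) := by
  have hterm (s t : Fin (n - J)) :
      toeplitz n σ (lagFst s) (lagFst t) * toeplitz n σ (lagSnd s) (lagSnd t) +
        toeplitz n σ (lagFst s) (lagSnd t) * toeplitz n σ (lagSnd s) (lagFst t) ≤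
      σ (s - t) ^ 2 + (1 / 2) * σ (s - J - t) ^ 2 + (1 / 2) * σ (s + J - t) ^ 2 := by
    simp only [toeplitz_apply_of_even hσ, lagFst, lagSnd, Nat.cast_add, add_sub_add_right_eq_sub]
    rw [sub_add_eq_sub_sub_swap]
    linarith [two_mul_le_add_sq (σ (s - J - t)) (σ (s + J - t))]
  have hrow (s : Fin (n - J)) :
      ∑ t : Fin (n - J), (σ (s - t) ^ 2 + (1 / 2) * σ (s - J - t) ^ 2 +
        (1 / 2) * σ (s + J - t) ^ 2) ≤ 2 * M := by
    simp only [Finset.sum_add_distrib, ← Finset.mul_sum]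
    linarith [sum_sq_sub_le_of_tsum_le hs hM (n - J) s,
      sum_sq_sub_le_of_tsum_le hs hM (n - J) (s - J),
      sum_sq_sub_le_of_tsum_le hs hM (n - J) (s + J)]
  calc _ ≤ ∑ _s : Fin (n - J), 2 * M :=
        Finset.sum_le_sum fun s _ => (Finset.sum_le_sum fun t _ => hterm s t).trans (hrow s)
    _ = (n - J : ℕ) * (2 * M) := by simp

end Toeplitz

section Error

variable {n : ℕ} {σ : ℤ → ℝ} {M : ℝ} {μ : Measure (Fin n → ℝ)} {j : ℤ}

lemma IsCenteredGaussian.secondMomentLE_sum_lag_mul_sub {J : ℕ}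
    (hμ : IsCenteredGaussian μ (toeplitz n σ)) (hS : (toeplitz n σ).PosSemidef)
    (hσ : ∀ k, σ (-k) = σ k) (hs : Summable fun k : ℤ => σ k ^ 2)
    (hM : ∑' k : ℤ, σ k ^ 2 ≤ M) :
    SecondMomentLE
      (fun x => ∑ t : Fin (n - J),
        (x (lagFst t) * x (lagSnd t) - toeplitz n σ (lagFst t) (lagSnd t))) μ
      ((n - J : ℕ) * (2 * M)) := by
  have := hμ.isProbabilityMeasure
  have hmem (t : Fin (n - J)) : MemLp (fun x : Fin n → ℝ =>
      x (lagFst t) * x (lagSnd t) - toeplitz n σ (lagFst t) (lagSnd t)) 2 μ :=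
    (hμ.memLp_mul _ _).sub (memLp_const _)
  refine ⟨memLp_finsetSum _ fun t _ => hmem t, ?_⟩
  rw [integral_sum_sq hmem]
  simp_rw [hμ.integral_mul_sub_mul_mul_sub hS]
  exact sum_sum_toeplitz_mul_le hσ hs hM

lemma natAbs_sq_le_of_abs_le_sqrt (hj : (|j| : ℝ) ≤ √n) : (j.natAbs : ℝ) ^ 2 ≤ n := by
  rw [Nat.cast_natAbs, Int.cast_abs]
  exact (Real.le_sqrt (abs_nonneg _) n.cast_nonneg).1 hj

lemma natAbs_le_of_abs_le_sqrt (hj : (|j| : ℝ) ≤ √n) : j.natAbs ≤ n :=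
  (Nat.le_pow two_pos).trans (mod_cast natAbs_sq_le_of_abs_le_sqrt hj)

lemma apply_natAbs_of_even (hσ : ∀ k, σ (-k) = σ k) (j : ℤ) : σ j.natAbs = σ j := by
  rw [Int.natCast_natAbs]
  rcases abs_choice j with h | h <;> rw [h]
  exact hσ j

lemma IsCenteredGaussian.secondMomentLE_sum_trim_mul_trim_sub
    (hμ : IsCenteredGaussian μ (toeplitz n σ)) (hS : (toeplitz n σ).PosSemidef)
    (hσ : ∀ k, σ (-k) = σ k) (hs : Summable fun k : ℤ => σ k ^ 2)
    (hM : ∑' k : ℤ, σ k ^ 2 ≤ M) (hj : (|j| : ℝ) ≤ √n) {c v : ℝ} (hc : 0 ≤ c) (hv : 0 < v)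
    (hσv : σ 0 ≤ v) :
    SecondMomentLE
      (fun x => ∑ t : Fin (n - j.natAbs), trim c (x (lagFst t)) * trim c (x (lagSnd t)) - n * σ j)
      μ (4 * n ^ 2 * truncationError c v + 10 * n * M) := by
  have := hμ.isProbabilityMeasure
  have hdiag (i : Fin n) : toeplitz n σ i i ≤ v := by simpa [toeplitz] using hσv
  have htrunc := SecondMomentLE.sum fun t : Fin (n - j.natAbs) =>
    hμ.secondMomentLE_trim_mul_trim_sub_mul hS hc hv hdiag (lagFst t) (lagSnd t)
  have hsampling := hμ.secondMomentLE_sum_lag_mul_sub (J := j.natAbs) hS hσ hs hM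
  have hbias := SecondMomentLE.const (P := μ) (-(j.natAbs * σ j))
  have hm : ((n - j.natAbs : ℕ) : ℝ) = n - j.natAbs :=
    Nat.cast_sub (natAbs_le_of_abs_le_sqrt hj)
  have hmn : ((n - j.natAbs : ℕ) : ℝ) ≤ n := Nat.cast_le.2 (Nat.sub_le _ _)
  have hσM : σ j ^ 2 ≤ M := (hs.le_tsum j fun k _ => sq_nonneg _).trans hM
  have hM0 : 0 ≤ M := (sq_nonneg _).trans hσM
  convert ((htrunc.add hsampling).add hbias).mono ?_ using 2 with x
  · simp only [Finset.sum_sub_distrib, toeplitz_lagFst_lagSnd, apply_natAbs_of_even hσ,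
      Finset.sum_const, Finset.card_univ, Fintype.card_fin, nsmul_eq_mul, hm]
    ring
  · have hbias_le : (-(j.natAbs * σ j)) ^ 2 ≤ n * M := by
      rw [neg_sq, mul_pow]
      exact mul_le_mul (natAbs_sq_le_of_abs_le_sqrt hj) hσM (sq_nonneg _) n.cast_nonneg
    have htrunc_le : ((n - j.natAbs : ℕ) : ℝ) ^ 2 * truncationError c v ≤
        n ^ 2 * truncationError c v := by
      have : 0 ≤ truncationError c v := by unfold truncationError; positivity
      gcongr
    have hsampling_le : ((n - j.natAbs : ℕ) : ℝ) * (2 * M) ≤ n * (2 * M) := by gcongr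
    rw [Fintype.card_fin]
    linarith

lemma secondMomentLE_sum_laplace_mul_sub {b : ℝ} (hb : 0 < b) (j : ℤ) :
    SecondMomentLE
      (fun y => ∑ t : Fin (n - j.natAbs), y (lagFst t) * y (lagSnd t) -
        n * if j = 0 then 2 * b ^ 2 else 0)
      (Measure.pi fun _ : Fin n => laplace 0 b) (n * (24 * b ^ 4)) := by
  have := isProbabilityMeasure_laplace (m := 0) hb
  have := isNegInvariant_laplace (b := b)
  have hsq := secondMomentLE_sq_laplace hb
  rcases eq_or_ne j 0 with rfl | hj
  · convert secondMomentLE_sum_comp_eval_sub_integral (ι := Fin n) hsq using 2 with y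
    · rw [Finset.sum_sub_distrib, integral_sq_laplace hb]
      simp [lagFst, lagSnd, sq]
    · simp
  · simp only [hj, if_false, mul_zero, sub_zero]
    refine (secondMomentLE_sum_eval_mul_eval hsq (lagFst_ne_lagSnd (Int.natAbs_pos.2 hj))
      injective_mk_lagFst_lagSnd).mono ?_
    rw [Fintype.card_fin]
    gcongr
    exact Nat.sub_le _ _

lemma secondMomentLE_trim_eval [IsProbabilityMeasure μ] {c : ℝ} (hc : 0 ≤ c) (i : Fin n) :
    SecondMomentLE (fun x => trim c (x i)) μ (c ^ 2) :=
  .of_sq_le (Measurable.aestronglyMeasurable (by fun_prop)) (integrable_const (c ^ 2))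
    (fun x => sq_le_sq.2 ((abs_trim_le hc _).trans (le_abs_self c))) (by simp)

lemma secondMomentLE_sum_trim_mul_laplace [IsProbabilityMeasure μ] {b c : ℝ} (hb : 0 < b)
    (hc : 0 ≤ c) {J : ℕ} (p : Fin (n - J) → Fin n) {q : Fin (n - J) → Fin n}
    (hq : Function.Injective q) :
    SecondMomentLE (fun w => ∑ t, trim c (w.1 (p t)) * w.2 (q t))
      (μ.prod (Measure.pi fun _ : Fin n => laplace 0 b)) (n * (c ^ 2 * (2 * b ^ 2))) := by
  have := isProbabilityMeasure_laplace (m := 0) hb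
  have := isNegInvariant_laplace (b := b)
  refine (secondMomentLE_sum_mul_eval (secondMomentLE_id_laplace hb)
    (fun t => secondMomentLE_trim_eval hc (p t)) hq).mono ?_
  rw [Fintype.card_fin]
  gcongr
  exact Nat.sub_le _ _

lemma sigmaHatNI_sub_eq (hn : 0 < n) (σj τ α : ℝ) (w : (Fin n → ℝ) × (Fin n → ℝ)) :
    sigmaHatNI n j τ α w - σj = 1 / n *
      ((∑ t : Fin (n - j.natAbs), trim τ (w.1 (lagFst t)) * trim τ (w.1 (lagSnd t)) - n * σj) +
        (∑ t : Fin (n - j.natAbs), trim τ (w.1 (lagFst t)) * w.2 (lagSnd t) +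
          ∑ t : Fin (n - j.natAbs), trim τ (w.1 (lagSnd t)) * w.2 (lagFst t)) +
        (∑ t : Fin (n - j.natAbs), w.2 (lagFst t) * w.2 (lagSnd t) -
          n * if j = 0 then 2 * (2 * τ / α) ^ 2 else 0)) := by
  have hn0 : (n : ℝ) ≠ 0 := Nat.cast_ne_zero.2 hn.ne'
  have hvar : 2 * (2 * τ / α) ^ 2 = 8 * τ ^ 2 / α ^ 2 := by ring
  have hexpand : sigmaHatNI n j τ α w = 1 / n * ∑ t : Fin (n - j.natAbs),
      (trim τ (w.1 (lagFst t)) + w.2 (lagFst t)) * (trim τ (w.1 (lagSnd t)) + w.2 (lagSnd t)) -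
      if j = 0 then 8 * τ ^ 2 / α ^ 2 else 0 := rfl
  simp_rw [hexpand, hvar, add_mul, mul_add, Finset.sum_add_distrib,
    mul_comm (trim τ (w.1 (lagSnd _)))]
  field_simp
  ring

theorem secondMomentLE_sigmaHatNI_sub (hn : 0 < n) {α τ : ℝ} (hα : 0 < α) (hτ : 0 < τ)
    (hσ : ∀ k, σ (-k) = σ k) (hS : (toeplitz n σ).PosSemidef)
    (hs : Summable fun k : ℤ => σ k ^ 2) (hM : ∑' k : ℤ, σ k ^ 2 ≤ M)
    (hμ : IsCenteredGaussian μ (toeplitz n σ)) (hj : (|j| : ℝ) ≤ √n) {v : ℝ} (hv : 0 < v)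
    (hσv : σ 0 ≤ v) :
    SecondMomentLE (fun w => sigmaHatNI n j τ α w - σ j)
      (μ.prod (Measure.pi fun _ : Fin n => laplace 0 (2 * τ / α)))
      (16 * truncationError τ v +
        (40 * M + 128 * τ ^ 4 / α ^ 2 + 768 * τ ^ 4 / α ^ 4) / n) := by
  have hb : 0 < 2 * τ / α := by positivity
  have := hμ.isProbabilityMeasure
  have := isProbabilityMeasure_laplace (m := 0) hb
  have hsignal := (hμ.secondMomentLE_sum_trim_mul_trim_sub hS hσ hs hM hj hτ.le hv
    hσv).comp_measurePreserving
      (measurePreserving_fst (ν := Measure.pi fun _ : Fin n => laplace 0 (2 * τ / α)))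
  have hnoise := (secondMomentLE_sum_laplace_mul_sub hb j).comp_measurePreserving
    (measurePreserving_snd (μ := μ) (ν := Measure.pi fun _ : Fin n => laplace 0 (2 * τ / α)))
  have hcross := secondMomentLE_sum_trim_mul_laplace (μ := μ) hb hτ.le (J := j.natAbs)
    lagFst lagSnd_injective
  have hcross' := secondMomentLE_sum_trim_mul_laplace (μ := μ) hb hτ.le (J := j.natAbs)
    lagSnd lagFst_injective
  simp_rw [sigmaHatNI_sub_eq hn]
  refine (((hsignal.add (hcross.add hcross')).add hnoise).const_mul (1 / n)).mono (le_of_eq ?_)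
  field_simp
  ring

end Error

section Rate

lemma truncationError_le_exp_div {n : ℕ} (hn : 0 < n) {c v : ℝ} (hv : 0 < v)
    (hc : 16 * v * log n ≤ c ^ 2) : truncationError c v ≤ 32 * exp (4 * v) / n := by
  have hlog : log n ≤ c ^ 2 / (16 * v) := by rwa [le_div_iff₀' (by positivity)]
  rw [truncationError, exp_sub, mul_div_assoc]
  gcongr
  rwa [← log_le_iff_le_exp (Nat.cast_pos.2 hn)]

lemma one_div_sq_le_max_one_div_pow_four (α : ℝ) : 1 / α ^ 2 ≤ max 1 (1 / α ^ 4) := by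
  have hsq : 1 / α ^ 4 = (1 / α ^ 2) ^ 2 := by ring
  rw [hsq]
  rcases le_total (1 / α ^ 2) 1 with h | h
  · exact h.trans (le_max_left _ _)
  · exact (le_self_pow₀ h two_ne_zero).trans (le_max_right _ _)

lemma add_div_sq_add_div_pow_four_le {A B C Q : ℝ} (hA : 0 ≤ A) (hB : 0 ≤ B) (hC : 0 ≤ C)
    (hQ : 1 ≤ Q) (α : ℝ) :
    A + B * Q / α ^ 2 + C * Q / α ^ 4 ≤ (A + B + C) * Q * max 1 (1 / α ^ 4) := by
  have : 0 ≤ Q := zero_le_one.trans hQ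
  calc A + B * Q / α ^ 2 + C * Q / α ^ 4
      = A * 1 * 1 + B * Q * (1 / α ^ 2) + C * Q * (1 / α ^ 4) := by ring
    _ ≤ A * Q * max 1 (1 / α ^ 4) + B * Q * max 1 (1 / α ^ 4) +
          C * Q * max 1 (1 / α ^ 4) := by
        gcongr
        exacts [le_max_left _ _, one_div_sq_le_max_one_div_pow_four α, le_max_right _ _]
    _ = (A + B + C) * Q * max 1 (1 / α ^ 4) := by ring

lemma eventually_one_le_log_and_le_log_rpow {δ : ℝ} (hδ : 0 < δ) (v : ℝ) :
    ∀ᶠ n : ℕ in Filter.atTop, 1 ≤ log n ∧ v ≤ log n ^ δ := by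
  have hlog : Filter.Tendsto (fun n : ℕ => log n) Filter.atTop Filter.atTop :=
    tendsto_log_atTop.comp tendsto_natCast_atTop_atTop
  exact (hlog.eventually_ge_atTop 1).and
    (((tendsto_rpow_atTop hδ).comp hlog).eventually_ge_atTop v)

lemma sixteen_mul_mul_le_of_le_rpow {v L δ : ℝ} (hL : 0 < L) (hv : v ≤ L ^ δ) :
    16 * v * L ≤ 56 * L ^ (1 + δ) := by
  rw [rpow_add hL, rpow_one]
  have hvL : v * L ≤ L * L ^ δ := by
    rw [mul_comm L]
    gcongr
  have : 0 ≤ L * L ^ δ := by positivity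
  linarith

lemma sqrt_mul_rpow_pow_four {L : ℝ} (hL : 0 < L) (δ : ℝ) :
    √(56 * L ^ (1 + δ)) ^ 4 = 56 ^ 2 * L ^ (2 + 2 * δ) := by
  calc √(56 * L ^ (1 + δ)) ^ 4
      = (√(56 * L ^ (1 + δ)) ^ 2) ^ 2 := by ring
    _ = 56 ^ 2 * L ^ (2 + 2 * δ) := by
        rw [sq_sqrt (by positivity), mul_pow, ← rpow_mul_natCast hL.le]
        congr 2
        push_cast
        ring

lemma error_bound_le_rate {n : ℕ} {v M τ Q : ℝ} (hM : 0 ≤ M) (hQ : 1 ≤ Q)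
    (hτ : τ ^ 4 = 56 ^ 2 * Q) (htrunc : truncationError τ v ≤ 32 * exp (4 * v) / n) (α : ℝ) :
    16 * truncationError τ v + (40 * M + 128 * τ ^ 4 / α ^ 2 + 768 * τ ^ 4 / α ^ 4) / n ≤
      (512 * exp (4 * v) + 40 * M + 128 * 56 ^ 2 + 768 * 56 ^ 2) * Q *
        max (1 / (n : ℝ)) (1 / (n * α ^ 4)) := by
  have hmax : max (1 / (n : ℝ)) (1 / (n * α ^ 4)) = max 1 (1 / α ^ 4) / n := by
    rw [← max_div_div_right n.cast_nonneg, div_div, mul_comm (α ^ 4)]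
  calc 16 * truncationError τ v + (40 * M + 128 * τ ^ 4 / α ^ 2 + 768 * τ ^ 4 / α ^ 4) / n
      ≤ 16 * (32 * exp (4 * v) / n) +
          (40 * M + 128 * τ ^ 4 / α ^ 2 + 768 * τ ^ 4 / α ^ 4) / n := by gcongr
    _ = (512 * exp (4 * v) + 40 * M + 128 * 56 ^ 2 * Q / α ^ 2 + 768 * 56 ^ 2 * Q / α ^ 4) / n := by
        rw [hτ]; ring
    _ ≤ (512 * exp (4 * v) + 40 * M + 128 * 56 ^ 2 + 768 * 56 ^ 2) * Q * max 1 (1 / α ^ 4) / n := by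
        gcongr
        exact add_div_sq_add_div_pow_four_le (by positivity) (by norm_num) (by norm_num) hQ α
    _ = _ := by rw [hmax, mul_div_assoc]

theorem noninteractive_covariance_rate_general (M₁ : ℝ) (hM₁ : 0 < M₁) :
    ∃ c₁ : ℝ, 0 < c₁ ∧ ∀ δ : ℝ, 0 < δ →
      ∃ N : ℕ, ∀ n : ℕ, N ≤ n → ∀ α : ℝ, 0 < α →
      ∀ τ : ℝ, τ = √(56 * log n ^ (1 + δ)) →
      ∀ σ : ℤ → ℝ, (∀ k, σ (-k) = σ k) → (toeplitz n σ).PosSemidef →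
        Summable (fun k : ℤ => σ k ^ 2) → (∑' k : ℤ, σ k ^ 2) ≤ M₁ →
      ∀ μX : Measure (Fin n → ℝ), IsCenteredGaussian μX (toeplitz n σ) →
      ∀ j : ℤ, (|j| : ℝ) ≤ √n →
        (∫⁻ w : (Fin n → ℝ) × (Fin n → ℝ),
            ENNReal.ofReal ((sigmaHatNI n j τ α w - σ j) ^ 2)
          ∂(μX.prod (Measure.pi fun _ : Fin n => laplace 0 (2 * τ / α)))) ≤
          ENNReal.ofReal
            (c₁ * log n ^ (2 + 2 * δ) * max (1 / (n : ℝ)) (1 / (n * α ^ 4))) := by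
  set v := √M₁
  have hv : 0 < v := sqrt_pos.2 hM₁
  refine ⟨512 * exp (4 * v) + 40 * M₁ + 128 * 56 ^ 2 + 768 * 56 ^ 2, by positivity,
    fun δ hδ => ?_⟩
  obtain ⟨N, hN⟩ := Filter.eventually_atTop.1 (eventually_one_le_log_and_le_log_rpow hδ v)
  refine ⟨N, fun n hNn α hα τ hτ σ hσ hS hs hM μX hμ j hj => ?_⟩
  obtain ⟨hlog, hvlog⟩ := hN n hNn
  have hlog_pos : 0 < log n := zero_lt_one.trans_le hlog
  have hn : 0 < n := Nat.pos_of_ne_zero fun h => by simp [h] at hlog_pos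
  have hτ_pos : 0 < τ := by rw [hτ]; positivity
  have hτ_sq : τ ^ 2 = 56 * log n ^ (1 + δ) := by rw [hτ, sq_sqrt (by positivity)]
  have hσv : σ 0 ≤ v := le_sqrt_of_sq_le ((hs.le_tsum 0 fun k _ => sq_nonneg _).trans hM)
  have htrunc : truncationError τ v ≤ 32 * exp (4 * v) / n :=
    truncationError_le_exp_div hn hv
      ((sixteen_mul_mul_le_of_le_rpow hlog_pos hvlog).trans_eq hτ_sq.symm)
  exact ((secondMomentLE_sigmaHatNI_sub hn hα hτ_pos hσ hS hs hM hμ hj hv hσv).mono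
    (error_bound_le_rate hM₁.le (one_le_rpow hlog (by linarith))
      (hτ ▸ sqrt_mul_rpow_pow_four hlog_pos δ) htrunc α)).lintegral_le

end Rate

/-- Rate of convergence of the non-interactive private estimator of a covariance
coefficient (Proposition 2.1 i) of the paper): the mean squared error is at most
`c₁ · log^{2+2δ}(n) · max{1/n, 1/(nα⁴)}`. -/
theorem noninteractive_covariance_rate
    (δ M₁ : ℝ) (hδ : 0 < δ) (hM₁ : 0 < M₁) :
    ∃ c₁ : ℝ, 0 < c₁ ∧
      ∃ N : ℕ, ∀ n : ℕ, N ≤ n → ∀ α : ℝ, α ∈ Set.Ioo (0 : ℝ) 1 →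
      ∀ τ : ℝ, τ = Real.sqrt (56 * Real.log n ^ (1 + δ)) →
      ∀ σ : ℤ → ℝ, (∀ k, σ (-k) = σ k) → (toeplitz n σ).PosSemidef →
        Summable (fun k : ℤ => σ k ^ 2) → (∑' k : ℤ, σ k ^ 2) ≤ M₁ →
      ∀ μX : Measure (Fin n → ℝ), IsProbabilityMeasure μX →
        IsCenteredGaussian μX (toeplitz n σ) →
      ∀ j : ℤ, (|j| : ℝ) ≤ Real.sqrt n →
        (∫⁻ w : (Fin n → ℝ) × (Fin n → ℝ),
            ENNReal.ofReal ((sigmaHatNI n j τ α w - σ j) ^ 2)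
          ∂(μX.prod (Measure.pi fun _ : Fin n => laplace 0 (2 * τ / α)))) ≤
          ENNReal.ofReal
            (c₁ * Real.log n ^ (2 + 2 * δ) *
              max (1 / (n : ℝ)) (1 / (n * α ^ 4))) := by
  obtain ⟨c₁, hc₁, hrate⟩ := noninteractive_covariance_rate_general M₁ hM₁
  obtain ⟨N, hN⟩ := hrate δ hδ
  exact ⟨c₁, hc₁, N, fun n hn α hα τ hτ σ hσ hS hs hM μX _ => hN n hn α hα.1 τ hτ σ hσ hS hs hM μX⟩
end
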